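/- For a finite set x of distinct points on the real line with the sequential-neighbour relation, condition (C1) holds: if the clique indicator of a subset y of z changes upon adding a new point u (i.e., χ(y|z) ≠ χ(y|z ∪ {u})), then every point of y is a sequential neighbour of u in z ∪ {u}. -/

import Mathlib

open scoped Classical

/-- Sequential-neighbour relation on the real line: no point of `x` lies strictly
between `a` and `b`. -/
def SeqNbr (x : Finset ℝ) (a b : ℝ) : Prop :=
  ∀ c ∈ x, ¬(min a b < c ∧ c < max a b)

/-- Clique indicator for the sequential-neighbour relation (equal to 1 for sets of
size at most one). -/
noncomputable def chiSeq (x y : Finset ℝ) : ℕ :=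
  if ∀ a ∈ y, ∀ b ∈ y, SeqNbr x a b then 1 else 0

/-- Consistency condition (C1) for the sequential-neighbour relation on ℝ: if the
clique indicator of `y ⊆ z` changes upon adding a new point `u`, then every point of
`y` is a sequential neighbour of `u` in `z ∪ {u}`. -/
theorem seqNbr_C1 (y z : Finset ℝ) (hyz : y ⊆ z) (u : ℝ) (hu : u ∉ z) :
    chiSeq z y ≠ chiSeq (insert u z) y → ∀ a ∈ y, SeqNbr (insert u z) a u := by
  intro hne
  have anti : (∀ a ∈ y, ∀ b ∈ y, SeqNbr (insert u z) a b) → ∀ a ∈ y, ∀ b ∈ y, SeqNbr z a b :=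
    fun h a ha b hb c hc => h a ha b hb c (Finset.mem_insert_of_mem hc)
  obtain ⟨hz, hi⟩ : (∀ a ∈ y, ∀ b ∈ y, SeqNbr z a b) ∧
      ¬∀ a ∈ y, ∀ b ∈ y, SeqNbr (insert u z) a b := by
    unfold chiSeq at hne
    split_ifs at hne <;> tauto
  obtain ⟨p, hp, q, hq, hpu, huq⟩ : ∃ p ∈ y, ∃ q ∈ y, p < u ∧ u < q := by
    by_contra! hno
    refine hi fun a ha b hb c hc hcab => ?_
    rcases Finset.mem_insert.mp hc with rfl | hc
    · rcases le_total a b with hab | hab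
      · rw [min_eq_left hab, max_eq_right hab] at hcab
        exact (hno a ha b hb hcab.1).not_gt hcab.2
      · rw [min_eq_right hab, max_eq_left hab] at hcab
        exact (hno b hb a ha hcab.1).not_gt hcab.2
    · exact hz a ha b hb c hc hcab
  have gap : ∀ a ∈ y, ∀ b ∈ y, ∀ c ∈ z, a < c → ¬c < b := fun a ha b hb c hc hac hcb =>
    hz a ha b hb c hc ⟨(min_le_left a b).trans_lt hac, hcb.trans_le (le_max_right a b)⟩
  intro a ha c hc hcau
  rcases Finset.mem_insert.mp hc with rfl | hc
  · grind
  · rcases le_total a u with hau | hau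
    · rw [min_eq_left hau, max_eq_right hau] at hcau
      exact gap a ha q hq c hc hcau.1 (hcau.2.trans huq)
    · rw [min_eq_right hau, max_eq_left hau] at hcau
      exact gap p hp a ha c hc (hpu.trans hcau.1) hcau.2
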